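/- Let U ⊆ ℂ be open and let h, v, w : U → ℂ be smooth. Then L_v(D_h w) − L_w(D_h v) − D_h([v,w]) = 0 on U, where L_v q = v·∂q + 2·(∂v)·q is the Lie derivative on weight-2 quantities and [v,w] = v·∂w − w·∂v is the Lie bracket of vector fields. -/

import Mathlib

/-!
On the open set `U` the operator `∂ = wd` is a derivation of the ring of smooth functions: it
preserves smoothness (`smooth_wd`), is additive (`wd_add`, `wd_sub`), satisfies the Leibniz rule
(`wd_mul`) and depends only on the values of its argument on `U` (`wd_eqOn`). The identity is a
formal consequence of these rules. One has `∂[v,w] = v ∂²w - w ∂²v`, hence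
`∂³[v,w] = v ∂⁴w + 2 ∂v ∂³w - w ∂⁴v - 2 ∂w ∂³v`, and after expanding `∂(D_h w)` and `∂(D_h v)`
all terms cancel.
-/

open Complex MeasureTheory

/-- The Wirtinger derivative ∂u = (u_x − i·u_y)/2 of a function `u : ℂ → ℂ`. -/
noncomputable def wd (u : ℂ → ℂ) : ℂ → ℂ :=
  fun z => (fderiv ℝ u z 1 - Complex.I * fderiv ℝ u z Complex.I) / 2

/-- The conjugate Wirtinger derivative ∂̄u = (u_x + i·u_y)/2. -/
noncomputable def wdbar (u : ℂ → ℂ) : ℂ → ℂ :=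
  fun z => (fderiv ℝ u z 1 + Complex.I * fderiv ℝ u z Complex.I) / 2

/-- The Schwarzian derivative {f,z} = ∂³f/∂f − (3/2)·(∂²f/∂f)² of a smooth map. -/
noncomputable def schwarz (f : ℂ → ℂ) : ℂ → ℂ :=
  fun z => wd (wd (wd f)) z / wd f z - (3/2) * (wd (wd f) z / wd f z)^2

/-- The Schwarzian derivative S(g) = g'''/g' − (3/2)·(g''/g')² of a holomorphic map. -/
noncomputable def schwarzD (g : ℂ → ℂ) : ℂ → ℂ :=
  fun z => deriv (deriv (deriv g)) z / deriv g z - (3/2) * (deriv (deriv g) z / deriv g z)^2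

/-- The operator ∂̄_μ^{(k)} u = ∂̄u − μ·∂u − k·(∂μ)·u. -/
noncomputable def dbarMu (μ : ℂ → ℂ) (k : ℤ) (u : ℂ → ℂ) : ℂ → ℂ :=
  fun z => wdbar u z - μ z * wd u z - (k : ℂ) * wd μ z * u z

/-- The third-order operator D_h u = ∂³u + 2h·∂u + (∂h)·u. -/
noncomputable def Dop (h u : ℂ → ℂ) : ℂ → ℂ :=
  fun z => wd (wd (wd u)) z + 2 * h z * wd u z + wd h z * u z

/-- The Lie derivative on weight-2 quantities: L_v q = v·∂q + 2·(∂v)·q. -/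
noncomputable def lieD (v q : ℂ → ℂ) : ℂ → ℂ :=
  fun z => v z * wd q z + 2 * wd v z * q z

theorem smooth_wd {U : Set ℂ} (hU : IsOpen U) {u : ℂ → ℂ}
    (hu : ContDiffOn ℝ (⊤ : ℕ∞) u U) : ContDiffOn ℝ (⊤ : ℕ∞) (wd u) U := by
  have h1 : ContDiffOn ℝ (⊤ : ℕ∞) (fderiv ℝ u) U :=
    hu.fderiv_of_isOpen hU (by simp)
  unfold wd
  exact ((h1.clm_apply contDiffOn_const).sub
    (contDiffOn_const.mul (h1.clm_apply contDiffOn_const))).div_const 2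

/-- The derivative `wd` is local: on an open set it depends only on the values there. -/
theorem wd_eqOn {U : Set ℂ} (hU : IsOpen U) {f g : ℂ → ℂ} (hfg : Set.EqOn f g U) :
    Set.EqOn (wd f) (wd g) U := by
  intro z hz
  have he : f =ᶠ[nhds z] g := hfg.eventuallyEq_of_mem (hU.mem_nhds hz)
  simp only [wd, he.fderiv_eq]

theorem differentiableAt_of_smooth {U : Set ℂ} (hU : IsOpen U) {u : ℂ → ℂ}
    (hu : ContDiffOn ℝ (⊤ : ℕ∞) u U) {z : ℂ} (hz : z ∈ U) : DifferentiableAt ℝ u z :=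
  (hu.contDiffAt (hU.mem_nhds hz)).differentiableAt (by simp)

theorem wd_add {f g : ℂ → ℂ} {z : ℂ} (hf : DifferentiableAt ℝ f z)
    (hg : DifferentiableAt ℝ g z) : wd (fun x => f x + g x) z = wd f z + wd g z := by
  simp only [wd, fderiv_fun_add hf hg, add_apply]
  ring

theorem wd_sub {f g : ℂ → ℂ} {z : ℂ} (hf : DifferentiableAt ℝ f z)
    (hg : DifferentiableAt ℝ g z) : wd (fun x => f x - g x) z = wd f z - wd g z := by
  simp only [wd, fderiv_fun_sub hf hg, sub_apply]
  ring

theorem wd_mul {f g : ℂ → ℂ} {z : ℂ} (hf : DifferentiableAt ℝ f z)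
    (hg : DifferentiableAt ℝ g z) :
    wd (fun x => f x * g x) z = wd f z * g z + f z * wd g z := by
  simp only [wd, fderiv_fun_mul hf hg, add_apply,
    smul_apply, smul_eq_mul]
  ring

theorem wd_const (c z : ℂ) : wd (fun _ => c) z = 0 := by
  simp [wd]

/-- The derivative of `D_h u`, expanded by the Leibniz rule. -/
theorem wd_Dop {U : Set ℂ} (hU : IsOpen U) {h u : ℂ → ℂ}
    (hh : ContDiffOn ℝ (⊤ : ℕ∞) h U) (hu : ContDiffOn ℝ (⊤ : ℕ∞) u U) {z : ℂ} (hz : z ∈ U) :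
    wd (Dop h u) z = wd (wd (wd (wd u))) z + 2 * h z * wd (wd u) z + 3 * wd h z * wd u z
      + wd (wd h) z * u z := by
  have d0 := differentiableAt_of_smooth hU hu hz
  have d1 := differentiableAt_of_smooth hU (smooth_wd hU hu) hz
  have d3 := differentiableAt_of_smooth hU (smooth_wd hU (smooth_wd hU (smooth_wd hU hu))) hz
  have e0 := differentiableAt_of_smooth hU hh hz
  have e1 := differentiableAt_of_smooth hU (smooth_wd hU hh) hz
  have c2 : DifferentiableAt ℝ (fun _ : ℂ => (2 : ℂ)) z := differentiableAt_const _
  have e2 := c2.fun_mul e0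
  unfold Dop
  rw [wd_add (d3.fun_add (e2.fun_mul d1)) (e1.fun_mul d0), wd_add d3 (e2.fun_mul d1),
    wd_mul e2 d1, wd_mul c2 e0, wd_mul e1 d0, wd_const]
  ring

/-- Leibniz rule for a difference of two products, the shape of `[v,w]` and its derivatives. -/
theorem wd_mul_sub_mul {a b c d : ℂ → ℂ} {z : ℂ} (ha : DifferentiableAt ℝ a z)
    (hb : DifferentiableAt ℝ b z) (hc : DifferentiableAt ℝ c z) (hd : DifferentiableAt ℝ d z) :
    wd (fun x => a x * b x - c x * d x) z
      = wd a z * b z + a z * wd b z - (wd c z * d z + c z * wd d z) := by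
  rw [wd_sub (ha.fun_mul hb) (hc.fun_mul hd), wd_mul ha hb, wd_mul hc hd]

/-- `L_v(D_h w) − L_w(D_h v) − D_h([v,w]) = 0` on `U`. -/
theorem stmt4 (U : Set ℂ) (hU : IsOpen U) (h v w : ℂ → ℂ)
    (hh : ContDiffOn ℝ (⊤ : ℕ∞) h U) (hv : ContDiffOn ℝ (⊤ : ℕ∞) v U) (hw : ContDiffOn ℝ (⊤ : ℕ∞) w U) :
    ∀ z ∈ U,
      lieD v (Dop h w) z - lieD w (Dop h v) z
        - Dop h (fun x => v x * wd w x - w x * wd v x) z = 0 := by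
  intro z hz
  have D : ∀ {u : ℂ → ℂ}, ContDiffOn ℝ (⊤ : ℕ∞) u U → ∀ {x : ℂ}, x ∈ U →
      DifferentiableAt ℝ u x := fun hu _ hx => differentiableAt_of_smooth hU hu hx
  have hv1 := smooth_wd hU hv
  have hv2 := smooth_wd hU hv1
  have hv3 := smooth_wd hU hv2
  have hw1 := smooth_wd hU hw
  have hw2 := smooth_wd hU hw1
  have hw3 := smooth_wd hU hw2
  -- The terms `∂v ∂w` cancel in the first derivative of the bracket.
  have b1 : Set.EqOn (wd (fun x => v x * wd w x - w x * wd v x))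
      (fun x => v x * wd (wd w) x - w x * wd (wd v) x) U := by
    intro x hx
    rw [wd_mul_sub_mul (D hv hx) (D hw1 hx) (D hw hx) (D hv1 hx)]
    ring
  have b2 : Set.EqOn (wd (wd (fun x => v x * wd w x - w x * wd v x)))
      (fun x => (wd v x * wd (wd w) x - wd w x * wd (wd v) x)
        + (v x * wd (wd (wd w)) x - w x * wd (wd (wd v)) x)) U := by
    intro x hx
    rw [wd_eqOn hU b1 hx, wd_mul_sub_mul (D hv hx) (D hw2 hx) (D hw hx) (D hv2 hx)]
    ring
  have b3 : wd (wd (wd (fun x => v x * wd w x - w x * wd v x))) z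
      = 2 * wd v z * wd (wd (wd w)) z + v z * wd (wd (wd (wd w))) z
        - 2 * wd w z * wd (wd (wd v)) z - w z * wd (wd (wd (wd v))) z := by
    rw [wd_eqOn hU b2 hz,
      wd_add (((D hv1 hz).fun_mul (D hw2 hz)).fun_sub ((D hw1 hz).fun_mul (D hv2 hz)))
        (((D hv hz).fun_mul (D hw3 hz)).fun_sub ((D hw hz).fun_mul (D hv3 hz))),
      wd_mul_sub_mul (D hv1 hz) (D hw2 hz) (D hw1 hz) (D hv2 hz),
      wd_mul_sub_mul (D hv hz) (D hw3 hz) (D hw hz) (D hv3 hz)]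
    ring
  have b1z := b1 hz
  simp only [lieD, wd_Dop hU hh hw hz, wd_Dop hU hh hv hz]
  simp only [Dop, b3, b1z]
  ring
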